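/- Suppose f″ ∈ L_2[a,b]. Then |τ(x;α,β) − κ·m(x)| ≤ (b−a)·N(x)·[ (1/(b−a))·‖f″‖_2² − κ² ]^{1/2}, where ‖f″‖_2² = ∫_a^b f″(t)² dt, κ = (f′(b) − f′(a))/(b−a), m(x) = ∫_a^b P(x,t) dt = (1/(6(α+β)))·[ (α/(x−a))·{(x−a−h(b−a)/2)³ + (h(b−a)/2)³} + (β/(b−x))·{(b−h(b−a)/2−x)³ + (h(b−a)/2)³} ], and N(x)² = (1/(b−a))·(1/(20(α+β)²))·[ (α²/(x−a)²)·{(x−a−h(b−a)/2)⁵ + (h(b−a)/2)⁵} + (β²/(b−x)²)·{(b−h(b−a)/2−x)⁵ + (h(b−a)/2)⁵} ] − (m(x)/(b−a))². -/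

import Mathlib

open MeasureTheory intervalIntegral

/-- Integral mean of `f` over `[c,d]`. -/
noncomputable def intMean (f : ℝ → ℝ) (c d : ℝ) : ℝ :=
  (1 / (d - c)) * ∫ t in c..d, f t

/-- The functional τ(x; α, β) of the paper (with parameter h). -/
noncomputable def tau (a b h α β : ℝ) (f f' : ℝ → ℝ) (x : ℝ) : ℝ :=
  (1 / (2 * (α + β))) * ((α / (x - a)) * (x - a - h * (b - a) / 2) ^ 2
      - (β / (b - x)) * (x - b + h * (b - a) / 2) ^ 2) * f' x
  - (1 / (α + β)) * ((α / (x - a)) * (x - a - h * (b - a) / 2)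
      - (β / (b - x)) * (x - b + h * (b - a) / 2)) * f x
  - (h * (b - a) / (2 * (α + β))) * ((α / (x - a)) * f a + (β / (b - x)) * f b)
  + (h ^ 2 * (b - a) ^ 2 / (8 * (α + β))) * ((β / (b - x)) * f' b - (α / (x - a)) * f' a)
  + (1 / (α + β)) * (α * intMean f a x + β * intMean f x b)

/-- The quantity m(x) = ∫_a^b P(x,t) dt. -/
noncomputable def pertM (a b h α β x : ℝ) : ℝ :=
  (1 / (6 * (α + β))) *
    ((α / (x - a)) * ((x - a - h * (b - a) / 2) ^ 3 + (h * (b - a) / 2) ^ 3)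
      + (β / (b - x)) * ((b - h * (b - a) / 2 - x) ^ 3 + (h * (b - a) / 2) ^ 3))

/-- The quantity N(x)² of the perturbed results. -/
noncomputable def pertNsq (a b h α β x : ℝ) : ℝ :=
  (1 / (b - a)) * (1 / (20 * (α + β) ^ 2)) *
    ((α ^ 2 / (x - a) ^ 2) * ((x - a - h * (b - a) / 2) ^ 5 + (h * (b - a) / 2) ^ 5)
      + (β ^ 2 / (b - x) ^ 2) * ((b - h * (b - a) / 2 - x) ^ 5 + (h * (b - a) / 2) ^ 5))
  - (pertM a b h α β x / (b - a)) ^ 2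

/-! Two integrations by parts on each of `[a, x]` and `[x, b]` give `τ = ∫ P(x, t) f''(t) dt`.
Since `m(x) = ∫ P(x, t) dt` and `κ` is the mean of `f''`, the difference `τ - κ m(x)` is `b - a`
times the covariance of `P(x, ·)` and `f''` under the uniform probability on `[a, b]`, and
Cauchy–Schwarz bounds it by the standard deviations, which are `N(x)` and
`(‖f''‖₂² / (b - a) - κ²)^(1/2)`. -/

open Set ProbabilityTheory
open scoped Interval

theorem sq_covariance_le_variance_mul_variance {Ω : Type*} {mΩ : MeasurableSpace Ω}
    {μ : Measure Ω} [IsFiniteMeasure μ] {X Y : Ω → ℝ} (hX : MemLp X 2 μ) (hY : MemLp Y 2 μ) :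
    cov[X, Y; μ] ^ 2 ≤ Var[X; μ] * Var[Y; μ] := by
  have variance_smul_add_nonneg (s : ℝ) :
      0 ≤ Var[X; μ] * (s * s) + 2 * cov[X, Y; μ] * s + Var[Y; μ] := by
    have h := variance_nonneg (s • X + Y) μ
    rw [variance_add (hX.const_smul s) hY, variance_smul, covariance_smul_left] at h
    linarith
  have h := discrim_le_zero variance_smul_add_nonneg
  rw [discrim] at h
  linarith

theorem abs_covariance_le_sqrt_variance_mul_sqrt_variance {Ω : Type*} {mΩ : MeasurableSpace Ω}
    {μ : Measure Ω} [IsFiniteMeasure μ] {X Y : Ω → ℝ} (hX : MemLp X 2 μ) (hY : MemLp Y 2 μ) :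
    |cov[X, Y; μ]| ≤ √Var[X; μ] * √Var[Y; μ] := by
  rw [← Real.sqrt_mul (variance_nonneg X μ)]
  exact Real.abs_le_sqrt (sq_covariance_le_variance_mul_variance hX hY)

theorem abs_average_mul_sub_le {Ω : Type*} {mΩ : MeasurableSpace Ω}
    {μ : Measure Ω} [IsFiniteMeasure μ] [NeZero μ] {X Y : Ω → ℝ}
    (hX : MemLp X 2 μ) (hY : MemLp Y 2 μ) :
    |(⨍ ω, X ω * Y ω ∂μ) - (⨍ ω, X ω ∂μ) * ⨍ ω, Y ω ∂μ| ≤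
      √((⨍ ω, X ω ^ 2 ∂μ) - (⨍ ω, X ω ∂μ) ^ 2) * √((⨍ ω, Y ω ^ 2 ∂μ) - (⨍ ω, Y ω ∂μ) ^ 2) := by
  have inv_ne_top : (μ univ)⁻¹ ≠ ⊤ := ENNReal.inv_ne_top.2 (NeZero.ne _)
  have hX' := hX.smul_measure inv_ne_top
  have hY' := hY.smul_measure inv_ne_top
  simpa only [covariance_eq_sub hX' hY', variance_eq_sub hX', variance_eq_sub hY'] using!
    abs_covariance_le_sqrt_variance_mul_sqrt_variance hX' hY'

instance isFiniteMeasure_restrict_uIoc (a b : ℝ) : IsFiniteMeasure (volume.restrict (Ι a b)) :=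
  inferInstanceAs (IsFiniteMeasure (volume.restrict (Ioc (min a b) (max a b))))

theorem abs_integral_mul_sub_le {a b : ℝ} (hab : a < b) {f g : ℝ → ℝ}
    (hf : MemLp f 2 (volume.restrict (Ι a b))) (hg : MemLp g 2 (volume.restrict (Ι a b))) :
    |(∫ t in a..b, f t * g t) - (∫ t in a..b, g t) / (b - a) * ∫ t in a..b, f t| ≤
      (b - a) * √((∫ t in a..b, f t ^ 2) / (b - a) - ((∫ t in a..b, f t) / (b - a)) ^ 2) *
        √((∫ t in a..b, g t ^ 2) / (b - a) - ((∫ t in a..b, g t) / (b - a)) ^ 2) := by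
  have hba : 0 < b - a := sub_pos.2 hab
  have : NeZero (volume.restrict (Ι a b)) :=
    ⟨by simp [Measure.restrict_eq_zero, uIoc_of_le hab.le, hab]⟩
  have h := mul_le_mul_of_nonneg_left (abs_average_mul_sub_le hf hg) hba.le
  simp only [interval_average_eq_div] at h
  rw [mul_assoc]
  refine Eq.trans_le ?_ h
  rw [← abs_of_pos hba, ← abs_mul, abs_of_pos hba]
  congr 1
  field_simp

theorem absolutelyContinuousOnInterval_congr {X : Type*} [PseudoMetricSpace X] {f g : ℝ → X}
    {a b : ℝ} (hf : AbsolutelyContinuousOnInterval f a b) (hfg : EqOn f g [[a, b]]) :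
    AbsolutelyContinuousOnInterval g a b := by
  rw [absolutelyContinuousOnInterval_iff] at hf ⊢
  refine fun ε hε ↦ (hf ε hε).imp fun δ ⟨hδ, h⟩ ↦ ⟨hδ, fun E hE hlen ↦ ?_⟩
  refine (Finset.sum_congr rfl fun i hi ↦ ?_).trans_lt (h E hE hlen)
  have hmem := hE.1 i hi
  rw [hfg hmem.1, hfg hmem.2]

section Primitive

variable {F g : ℝ → ℝ} {a b : ℝ}

theorem absolutelyContinuousOnInterval_of_eq_add_integral (hg : IntervalIntegrable g volume a b)
    (hF : ∀ t ∈ [[a, b]], F t = F a + ∫ u in a..t, g u) :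
    AbsolutelyContinuousOnInterval F a b := by
  have hconst : AbsolutelyContinuousOnInterval (fun _ : ℝ ↦ F a) a b :=
    contDiffOn_const.absolutelyContinuousOnInterval
  exact absolutelyContinuousOnInterval_congr
    (hconst.add (hg.absolutelyContinuousOnInterval_intervalIntegral left_mem_uIcc))
    fun t ht ↦ (hF t ht).symm

theorem ae_deriv_eq_of_eq_add_integral (hg : IntervalIntegrable g volume a b)
    (hF : ∀ t ∈ [[a, b]], F t = F a + ∫ u in a..t, g u) :
    ∀ᵐ t, t ∈ Ι a b → deriv F t = g t := by
  filter_upwards [hg.ae_hasDerivAt_integral, Measure.ae_ne volume (max a b)] with t hderiv ht_ne ht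
  have ht_nhds : [[a, b]] ∈ nhds t := Icc_mem_nhds ht.1 (ht.2.lt_of_ne ht_ne)
  have hF_eq : F =ᶠ[nhds t] fun s ↦ F a + ∫ u in a..s, g u := by
    filter_upwards [ht_nhds] with s hs using hF s hs
  rw [hF_eq.deriv_eq, deriv_const_add,
    (hderiv (uIoc_subset_uIcc ht) a left_mem_uIcc).deriv]

end Primitive

theorem integral_mul_deriv_eq_deriv_deriv_mul {u f F : ℝ → ℝ} {a b : ℝ} (hu : ContDiff ℝ 2 u)
    (hF : AbsolutelyContinuousOnInterval F a b)
    (hf : ∀ t ∈ [[a, b]], HasDerivWithinAt f (F t) [[a, b]] t) :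
    ∫ t in a..b, u t * deriv F t =
      u b * F b - u a * F a - (deriv u b * f b - deriv u a * f a) +
        ∫ t in a..b, deriv (deriv u) t * f t := by
  have hu' : ContDiff ℝ 1 (deriv u) := hu.deriv'
  have hu_ac : AbsolutelyContinuousOnInterval u a b :=
    (hu.of_le one_le_two).contDiffOn.absolutelyContinuousOnInterval
  rw [hu_ac.integral_mul_deriv_eq_deriv_mul hF,
    intervalIntegral.integral_mul_deriv_eq_deriv_mul_of_hasDerivWithinAt
      (fun t _ ↦ (hu'.differentiable one_ne_zero t).hasDerivAt.hasDerivWithinAt) hf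
      (hu'.continuous_deriv_one.intervalIntegrable a b) hF.continuousOn.intervalIntegrable]
  ring

theorem integral_mul_sub_sq_mul_deriv {f F : ℝ → ℝ} {a b : ℝ} (w e : ℝ)
    (hF : AbsolutelyContinuousOnInterval F a b)
    (hf : ∀ t ∈ [[a, b]], HasDerivWithinAt f (F t) [[a, b]] t) :
    ∫ t in a..b, w * (t - e) ^ 2 * deriv F t =
      w * ((b - e) ^ 2 * F b - (a - e) ^ 2 * F a - 2 * ((b - e) * f b - (a - e) * f a) +
        2 * ∫ t in a..b, f t) := by
  have deriv_sq : deriv (fun t : ℝ ↦ w * (t - e) ^ 2) = fun t ↦ 2 * w * (t - e) := by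
    ext t
    exact (((hasDerivAt_id' t).sub_const e).fun_pow 2 |>.const_mul w).deriv.trans (by ring)
  have deriv_deriv_sq : deriv (fun t : ℝ ↦ 2 * w * (t - e)) = fun _ ↦ 2 * w := by
    ext t; simp
  rw [integral_mul_deriv_eq_deriv_deriv_mul (by fun_prop) hF hf, deriv_sq, deriv_deriv_sq,
    intervalIntegral.integral_const_mul]
  ring

theorem integral_ite_le_eq_add {E : Type*} [NormedAddCommGroup E] [NormedSpace ℝ E]
    {f g : ℝ → E} {a b x : ℝ} (hx : x ∈ Icc a b) (hf : IntervalIntegrable f volume a x)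
    (hg : IntervalIntegrable g volume x b) :
    ∫ t in a..b, (if t ≤ x then f t else g t) = (∫ t in a..x, f t) + ∫ t in x..b, g t := by
  have hleft : EqOn f (fun t ↦ if t ≤ x then f t else g t) (Ι a x) := fun t ht ↦
    (if_pos (uIoc_of_le hx.1 ▸ ht).2).symm
  have hright : EqOn g (fun t ↦ if t ≤ x then f t else g t) (Ι x b) := fun t ht ↦
    (if_neg (uIoc_of_le hx.2 ▸ ht).1.not_ge).symm
  rw [← integral_add_adjacent_intervals (hf.congr hleft) (hg.congr hright)]
  congr 1
  · exact integral_congr_ae (.of_forall fun t ht ↦ (hleft ht).symm)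
  · exact integral_congr_ae (.of_forall fun t ht ↦ (hright ht).symm)

theorem integral_sub_pow (a b c : ℝ) (n : ℕ) :
    ∫ t in a..b, (t - c) ^ n = ((b - c) ^ (n + 1) - (a - c) ^ (n + 1)) / (n + 1) := by
  rw [integral_comp_sub_right (fun t ↦ t ^ n), integral_pow]

theorem memLp_restrict_uIoc_of_continuous {E : Type*} [NormedAddCommGroup E] {f : ℝ → E}
    (hf : Continuous f) (p : ENNReal) (a b : ℝ) : MemLp f p (volume.restrict (Ι a b)) := by
  obtain ⟨C, hC⟩ := isCompact_uIcc.exists_bound_of_continuousOn (s := [[a, b]]) hf.continuousOn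
  exact .of_bound hf.aestronglyMeasurable C
    (ae_restrict_of_forall_mem measurableSet_uIoc fun t ht ↦ hC t (uIoc_subset_uIcc ht))

/-- The kernel `P(x, t)` representing `tau` as `∫ P(x, t) f''(t) dt`. The vertices
`a + h (b - a) / 2` and `b - h (b - a) / 2` of its two parabolic branches are grouped, so that
each branch has the form `w * (t - e) ^ 2`. -/
noncomputable def peanoKernel (a b h α β x t : ℝ) : ℝ :=
  if t ≤ x then α / (2 * (α + β) * (x - a)) * (t - (a + h * (b - a) / 2)) ^ 2
  else β / (2 * (α + β) * (b - x)) * (t - (b - h * (b - a) / 2)) ^ 2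

section PeanoKernel

variable {a b h α β x : ℝ}

theorem memLp_peanoKernel (p : ENNReal) (c d : ℝ) :
    MemLp (peanoKernel a b h α β x) p (volume.restrict (Ι c d)) :=
  MemLp.piecewise (s := Iic x) measurableSet_Iic
    (.restrict _ (memLp_restrict_uIoc_of_continuous (by fun_prop) p c d))
    (.restrict _ (memLp_restrict_uIoc_of_continuous (by fun_prop) p c d))

theorem integral_peanoKernel_pow (hx : x ∈ Icc a b) (n : ℕ) :
    ∫ t in a..b, peanoKernel a b h α β x t ^ n =
      ((α / (2 * (α + β) * (x - a))) ^ n *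
          ((x - a - h * (b - a) / 2) ^ (2 * n + 1) + (h * (b - a) / 2) ^ (2 * n + 1)) +
        (β / (2 * (α + β) * (b - x))) ^ n *
          ((b - h * (b - a) / 2 - x) ^ (2 * n + 1) + (h * (b - a) / 2) ^ (2 * n + 1))) /
        (2 * n + 1) := by
  have hodd : Odd (2 * n + 1) := odd_two_mul_add_one n
  simp only [peanoKernel, ite_pow, mul_pow, ← pow_mul]
  rw [integral_ite_le_eq_add hx (Continuous.intervalIntegrable (by fun_prop) _ _)
      (Continuous.intervalIntegrable (by fun_prop) _ _)]
  simp only [intervalIntegral.integral_const_mul, integral_sub_pow]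
  rw [show a - (a + h * (b - a) / 2) = -(h * (b - a) / 2) by ring,
    show x - (b - h * (b - a) / 2) = -(b - h * (b - a) / 2 - x) by ring, hodd.neg_pow,
    hodd.neg_pow]
  push_cast
  ring

theorem integral_peanoKernel (hαβ : α + β ≠ 0) (hax : a < x) (hxb : x < b) :
    ∫ t in a..b, peanoKernel a b h α β x t = pertM a b h α β x := by
  have hxa : x - a ≠ 0 := sub_ne_zero.2 hax.ne'
  have hbx : b - x ≠ 0 := sub_ne_zero.2 hxb.ne'
  have h_pow := integral_peanoKernel_pow (h := h) (α := α) (β := β) ⟨hax.le, hxb.le⟩ 1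
  simp only [pow_one] at h_pow
  rw [h_pow, pertM]
  push_cast
  field_simp
  ring

theorem pertNsq_eq_integral_sq_sub_sq (hαβ : α + β ≠ 0) (hax : a < x) (hxb : x < b) :
    pertNsq a b h α β x = (∫ t in a..b, peanoKernel a b h α β x t ^ 2) / (b - a) -
      ((∫ t in a..b, peanoKernel a b h α β x t) / (b - a)) ^ 2 := by
  have hxa : x - a ≠ 0 := sub_ne_zero.2 hax.ne'
  have hbx : b - x ≠ 0 := sub_ne_zero.2 hxb.ne'
  rw [integral_peanoKernel_pow ⟨hax.le, hxb.le⟩, integral_peanoKernel hαβ hax hxb, pertNsq]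
  push_cast
  field_simp
  ring

theorem integral_peanoKernel_mul_deriv {f f' : ℝ → ℝ} (hαβ : α + β ≠ 0)
    (hax : a < x) (hxb : x < b)
    (hf' : AbsolutelyContinuousOnInterval f' a b)
    (hf : ∀ t ∈ [[a, b]], HasDerivWithinAt f (f' t) [[a, b]] t) :
    ∫ t in a..b, peanoKernel a b h α β x t * deriv f' t = tau a b h α β f f' x := by
  have hx : x ∈ Icc a b := ⟨hax.le, hxb.le⟩
  have hxa : x - a ≠ 0 := sub_ne_zero.2 hax.ne'
  have hbx : b - x ≠ 0 := sub_ne_zero.2 hxb.ne'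
  have left_subset : [[a, x]] ⊆ [[a, b]] := uIcc_subset_uIcc_left (Icc_subset_uIcc hx)
  have right_subset : [[x, b]] ⊆ [[a, b]] := uIcc_subset_uIcc_right (Icc_subset_uIcc hx)
  have hf'_left := hf'.mono left_subset
  have hf'_right := hf'.mono right_subset
  simp only [peanoKernel, ite_mul]
  rw [integral_ite_le_eq_add hx (hf'_left.intervalIntegrable_deriv.continuousOn_mul (by fun_prop))
      (hf'_right.intervalIntegrable_deriv.continuousOn_mul (by fun_prop)),
    integral_mul_sub_sq_mul_deriv _ _ hf'_left
      fun t ht ↦ (hf t (left_subset ht)).mono left_subset,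
    integral_mul_sub_sq_mul_deriv _ _ hf'_right
      fun t ht ↦ (hf t (right_subset ht)).mono right_subset, tau, intMean, intMean]
  field_simp
  ring

end PeanoKernel

theorem stmt_15_general {a b h α β x : ℝ} {f f' f'' : ℝ → ℝ} (hαβ : α + β ≠ 0)
    (hax : a < x) (hxb : x < b)
    (hfd : ∀ t ∈ Icc a b, HasDerivWithinAt f (f' t) (Icc a b) t)
    (hf''int : IntervalIntegrable f'' volume a b)
    (hac : ∀ t ∈ Icc a b, f' t = f' a + ∫ u in a..t, f'' u)
    (hL2 : IntervalIntegrable (fun t ↦ f'' t ^ 2) volume a b) :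
    |tau a b h α β f f' x - (f' b - f' a) / (b - a) * pertM a b h α β x| ≤
      (b - a) * √(pertNsq a b h α β x) *
        √(1 / (b - a) * (∫ t in a..b, f'' t ^ 2) - ((f' b - f' a) / (b - a)) ^ 2) := by
  have hab : a < b := hax.trans hxb
  have hf''L2 : MemLp f'' 2 (volume.restrict (Ι a b)) :=
    (memLp_two_iff_integrable_sq hf''int.def'.aestronglyMeasurable).2 hL2.def'
  have integral_f'' : ∫ t in a..b, f'' t = f' b - f' a :=
    eq_sub_of_add_eq' (hac b (right_mem_Icc.2 hab.le)).symm
  rw [← uIcc_of_le hab.le] at hfd hac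
  have hf'ac := absolutelyContinuousOnInterval_of_eq_add_integral hf''int hac
  have tau_eq : ∫ t in a..b, peanoKernel a b h α β x t * f'' t = tau a b h α β f f' x := by
    rw [← integral_peanoKernel_mul_deriv hαβ hax hxb hf'ac hfd]
    refine integral_congr_ae ?_
    filter_upwards [ae_deriv_eq_of_eq_add_integral hf''int hac] with t ht ht_mem
    rw [ht ht_mem]
  have hbound := abs_integral_mul_sub_le hab
    (memLp_peanoKernel (a := a) (b := b) (h := h) (α := α) (β := β) (x := x) 2 a b) hf''L2
  rwa [tau_eq, integral_f'', ← pertNsq_eq_integral_sq_sub_sq hαβ hax hxb,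
    integral_peanoKernel hαβ hax hxb,
    ← one_div_mul_eq_div (b - a) (∫ t in a..b, f'' t ^ 2)] at hbound

theorem stmt_15 (a b h α β x : ℝ) (f f' f'' : ℝ → ℝ)
    (hab : a < b)
    (hh : h ∈ Set.Icc (0 : ℝ) 1)
    (hα : 0 ≤ α) (hβ : 0 ≤ β) (hαβ : 0 < α + β)
    (hax : a < x) (hxb : x < b)
    (hx1 : a + h * (b - a) / 2 ≤ x) (hx2 : x ≤ b - h * (b - a) / 2)
    (hfd : ∀ t ∈ Set.Icc a b, HasDerivAt f (f' t) t)
    (hf''int : IntervalIntegrable f'' MeasureTheory.volume a b)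
    (hac : ∀ t ∈ Set.Icc a b, f' t = f' a + ∫ u in a..t, f'' u)
    (hL2 : IntervalIntegrable (fun t => (f'' t) ^ 2) MeasureTheory.volume a b) :
    |tau a b h α β f f' x - ((f' b - f' a) / (b - a)) * pertM a b h α β x| ≤
      (b - a) * Real.sqrt (pertNsq a b h α β x) *
        Real.sqrt ((1 / (b - a)) * (∫ t in a..b, (f'' t) ^ 2)
          - ((f' b - f' a) / (b - a)) ^ 2) :=
  stmt_15_general hαβ.ne' hax hxb (fun t ht ↦ (hfd t ht).hasDerivWithinAt) hf''int hac hL2
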